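/- Let X be a metric space homeomorphic to a closed topological disk, with manifold boundary ∂X. Let Ω ⊂ ℝ² be a closed Jordan domain, and suppose that for some L > 0 there exists an L-Lipschitz map f : ∂X → ∂Ω of non-zero topological degree. Then H²(X) ≥ (π/(4L²))·H²(Ω). -/

import Mathlib

open MeasureTheory Metric
open scoped NNReal ENNReal

/-!
STATEMENT 2: Besicovitch-type inequality.  If `X` is a metric space homeomorphic to a
closed topological disk with manifold boundary `∂X`, `Ω ⊂ ℝ²` is a closed Jordan domain,
and for some `L > 0` there is an `L`-Lipschitz map `f : ∂X → ∂Ω` of non-zero topological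
degree, then `H²(X) ≥ (π/(4L²))·H²(Ω)`.

Here `H²` is the Hausdorff 2-measure normalized (with the constant `π/4`) so that it
coincides with Lebesgue measure on the plane; we identify the plane `ℝ²` with `ℂ`.  The
manifold boundary of `X` is the image of the unit circle under a homeomorphism from the
closed unit disk onto `X` (this set is independent of the homeomorphism chosen).  A
continuous map between topological circles has non-zero degree if and only if it is not
null-homotopic, which is how we formalize the degree hypothesis.
-/

/-- The Hausdorff 2-measure, normalized so as to coincide with Lebesgue measure on `ℝ²`. -/
noncomputable def hausdorff2 (X : Type*) [MetricSpace X] [MeasurableSpace X] [BorelSpace X] :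
    Measure X := (ENNReal.ofReal (Real.pi / 4)) • MeasureTheory.Measure.hausdorffMeasure 2

/-- Continuous logarithms exist on simply connected, locally path connected spaces. -/
theorem bes_exists_log {A : Type*} [TopologicalSpace A] [SimplyConnectedSpace A]
    [LocallyPathConnectedSpace A] (g : A → ℂ) (hg : Continuous g) (h0 : ∀ a, g a ≠ 0) :
    ∃ G : A → ℂ, Continuous G ∧ ∀ a, Complex.exp (G a) = g a := by
  obtain ⟨a₀⟩ : Nonempty A := inferInstance
  obtain ⟨F, ⟨-, hF⟩, -⟩ := Complex.isCoveringMapOn_exp.existsUnique_continuousMap_lifts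
    (⟨g, hg⟩ : C(A, ℂ)) (a₀ := a₀) (e₀ := Complex.log (g a₀))
    (by simp [Complex.exp_log (h0 a₀)]) (by simpa using h0)
  exact ⟨F, F.continuous, fun a => congrFun hF a⟩

theorem bes_exists_circle_lift (k : ℝ → Circle) (hk : Continuous k) :
    ∃ κ : ℝ → ℝ, Continuous κ ∧ ∀ a, Circle.exp (κ a) = k a := by
  obtain ⟨e₀, he⟩ : ∃ e₀, Circle.exp e₀ = k 0 := ⟨Complex.arg (k 0), Circle.exp_arg _⟩
  obtain ⟨F, ⟨-, hF⟩, -⟩ := Circle.isCoveringMap_exp.existsUnique_continuousMap_lifts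
    (⟨k, hk⟩ : C(ℝ, Circle)) 0 e₀ he
  exact ⟨F, F.continuous, fun a => congrFun hF a⟩

theorem bes_log_unique (p q : ℝ → ℂ) (hp : Continuous p) (hq : Continuous q)
    (h : ∀ t, Complex.exp (p t) = Complex.exp (q t)) :
    ∃ n : ℤ, ∀ t, p t = q t + n * (2 * Real.pi * Complex.I) := by
  obtain ⟨n, hn⟩ := Complex.exp_eq_exp_iff_exists_int.1 (h 0)
  refine ⟨n, fun t => ?_⟩
  have := Complex.isCoveringMap_exp.eq_of_comp_eq (g₁ := p)
    (g₂ := fun t => q t + n * (2 * Real.pi * Complex.I)) hp (by fun_prop)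
    (by
      funext t
      apply Subtype.ext
      simp only [Function.comp]
      rw [h t]
      exact Complex.exp_eq_exp_iff_exists_int.2 ⟨-n, by push_cast; ring⟩) 0 hn
  exact congrFun this t

theorem bes_circle_unique (p q : ℝ → ℝ) (hp : Continuous p) (hq : Continuous q)
    (h : ∀ t, Circle.exp (p t) = Circle.exp (q t)) :
    ∃ n : ℤ, ∀ t, p t = q t + n * (2 * Real.pi) := by
  obtain ⟨n, hn⟩ := Circle.exp_eq_exp.1 (h 0)
  refine ⟨n, fun t => ?_⟩
  have := Circle.isCoveringMap_exp.eq_of_comp_eq (g₁ := p)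
    (g₂ := fun t => q t + n * (2 * Real.pi)) hp (by fun_prop)
    (by
      funext t
      simp only [Function.comp]
      rw [h t]
      exact Circle.exp_eq_exp.2 ⟨-n, by push_cast; ring⟩) 0 hn
  exact congrFun this t

/-- Periodic continuous functions descend to the circle. -/
theorem bes_descend {Y : Type*} [TopologicalSpace Y] (p : ℝ → Y) (hp : Continuous p)
    (hper : Function.Periodic p (2 * Real.pi)) :
    ∃ q : Circle → Y, Continuous q ∧ ∀ t, q (Circle.exp t) = p t := by
  have hs : Function.Surjective Circle.exp := fun w => ⟨Complex.arg w, Circle.exp_arg _⟩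
  have hQ : Topology.IsQuotientMap Circle.exp :=
    isLocalHomeomorph_circleExp.isOpenMap.isQuotientMap Circle.exp.continuous hs
  have key : ∀ t, p (Complex.arg (Circle.exp t)) = p t := by
    intro t
    obtain ⟨m, hm⟩ := Circle.exp_eq_exp.1 (Circle.exp_arg (Circle.exp t))
    rw [hm]
    exact hper.int_mul m t
  refine ⟨fun w => p (Complex.arg w), ?_, key⟩
  rw [hQ.continuous_iff]
  convert hp using 1
  funext t
  exact key t

theorem bes_circle_factor (H : Circle → ℂ) (hH : Continuous H) (h0 : ∀ w, H w ≠ 0)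
    (hno : ¬ ∃ g : Circle → ℂ, Continuous g ∧ ∀ w, Complex.exp (g w) = H w)
    (k : Circle → Circle) (hk : Continuous k)
    (A : Circle → ℂ) (hA : Continuous A) (hAk : ∀ w, Complex.exp (A w) = H (k w)) :
    ∃ κ : Circle → ℝ, Continuous κ ∧ ∀ w, Circle.exp (κ w) = k w := by
  have hs : Function.Surjective Circle.exp := fun w => ⟨Complex.arg w, Circle.exp_arg _⟩
  obtain ⟨κ, hκ, hκe⟩ := bes_exists_circle_lift (fun t => k (Circle.exp t)) (by fun_prop)
  obtain ⟨η, hη, hηe⟩ := bes_exists_log (fun t : ℝ => H (Circle.exp t)) (by fun_prop)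
    (fun t => h0 _)
  obtain ⟨n, hn⟩ := bes_circle_unique (fun t => κ (t + 2 * Real.pi)) κ (by fun_prop) hκ
    (fun t => by rw [hκe, hκe, Circle.exp_add_two_pi])
  obtain ⟨m, hm⟩ := bes_log_unique (fun t => η (t + 2 * Real.pi)) η (by fun_prop) hη
    (fun t => by rw [hηe, hηe, Circle.exp_add_two_pi])
  obtain ⟨c, hc⟩ := bes_log_unique (fun t => η (κ t)) (fun t => A (Circle.exp t))
    (by fun_prop) (by fun_prop) (fun t => by rw [hηe, hκe, hAk])
  have hm0 : m ≠ 0 := by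
    rintro rfl
    obtain ⟨q, hq, hqe⟩ := bes_descend η hη (fun t => by simpa using hm t)
    refine hno ⟨q, hq, fun w => ?_⟩
    obtain ⟨t, rfl⟩ := hs w
    rw [hqe, hηe]
  have hper : Function.Periodic (fun t : ℝ => η t - m * Complex.I * t) (2 * Real.pi) := by
    intro t
    have := hm t
    simp only at this ⊢
    rw [this]
    push_cast
    ring
  have h1 : η (κ (0 + 2 * Real.pi)) = η (κ 0) := by
    have a := hc (0 + 2 * Real.pi)
    have b := hc 0
    simp only [Circle.exp_add_two_pi] at a b
    rw [a, b]
  have h2 := hper.int_mul n (κ 0)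
  have h3 := hn 0
  beta_reduce at h2 h3
  rw [← h3, h1, h3] at h2
  have h4 : (m : ℂ) * n * (2 * Real.pi * Complex.I) = 0 := by
    push_cast at h2
    linear_combination -h2
  have hn0 : n = 0 := by
    simpa [hm0, Real.pi_ne_zero] using h4
  subst hn0
  obtain ⟨q, hq, hqe⟩ := bes_descend κ hκ (fun t => by simpa using hn t)
  refine ⟨q, hq, fun w => ?_⟩
  obtain ⟨t, rfl⟩ := hs w
  rw [hqe, hκe]

/-- A set with a bounded complementary component around `z` has no continuous `log (x - z)`. -/
theorem bes_no_log (J : Set ℂ) (hJ : IsClosed J) (U : Set ℂ) (z₀ : ℂ)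
    (hU : U = connectedComponentIn Jᶜ z₀) (hUb : Bornology.IsBounded U) (z : ℂ) (hz : z ∈ U)
    (g : J → ℂ) (hg : Continuous g) (hge : ∀ x : J, Complex.exp (g x) = x - z) : False := by
  classical
  have hfr : frontier U ⊆ J := by
    intro x hx
    by_contra hxJ
    have hop : IsOpen (connectedComponentIn Jᶜ x) := hJ.isOpen_compl.connectedComponentIn
    have hxm : x ∈ connectedComponentIn Jᶜ x := mem_connectedComponentIn hxJ
    obtain ⟨y, hy1, hy2⟩ := mem_closure_iff.1 hx.1 _ hop hxm
    have e1 := connectedComponentIn_eq hy1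
    rw [hU] at hy2
    have e2 := connectedComponentIn_eq hy2
    have hxU : x ∈ U := by rw [hU, e2, ← e1]; exact hxm
    have hUo : IsOpen U := by rw [hU]; exact hJ.isOpen_compl.connectedComponentIn
    rw [hUo.frontier_eq] at hx
    exact hx.2 hxU
  obtain ⟨G, hG⟩ := ContinuousMap.exists_restrict_eq hJ (⟨g, hg⟩ : C(J, ℂ))
  have hGe : ∀ x ∈ J, Complex.exp (G x) = x - z := by
    intro x hx
    have : G x = g ⟨x, hx⟩ := DFunLike.congr_fun hG ⟨x, hx⟩
    rw [this, hge]
  obtain ⟨P, hP, hPe⟩ := bes_exists_log (U.piecewise (fun x => Complex.exp (G x)) (fun x => x - z))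
    (Continuous.piecewise (fun a ha => hGe a (hfr ha)) (by fun_prop) (by fun_prop))
    (by
      intro a
      by_cases ha : a ∈ U
      · simp [ha, Complex.exp_ne_zero]
      · simp only [ha, not_false_eq_true, Set.piecewise_eq_of_notMem, ne_eq, sub_eq_zero]
        rintro rfl
        exact ha hz)
  obtain ⟨R, hR⟩ := hUb.subset_ball z
  have hRpos : 0 < R := by
    have := hR hz
    simpa using this
  obtain ⟨n, hn⟩ := bes_log_unique (fun t => P (z + R * Complex.exp (t * Complex.I)))
    (fun t => Real.log R + t * Complex.I) (by fun_prop) (by fun_prop) (by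
      intro t
      rw [hPe, Set.piecewise_eq_of_notMem, Complex.exp_add, ← Complex.ofReal_exp,
        Real.exp_log hRpos]
      · ring
      · intro h
        have := hR h
        simp [Complex.norm_exp_ofReal_mul_I, abs_of_pos hRpos] at this)
  have a := hn 0
  have b := hn (2 * Real.pi)
  beta_reduce at a b
  have e : Complex.exp (((2 * Real.pi : ℝ) : ℂ) * Complex.I) = Complex.exp ((0 : ℝ) * Complex.I) := by
    push_cast
    rw [Complex.exp_two_pi_mul_I]
    simp
  rw [e, a] at b
  have : (2 * Real.pi : ℂ) * Complex.I = 0 := by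
    push_cast at b
    linear_combination -b
  simp [Real.pi_ne_zero] at this

theorem bes_hausdorff_le (s : Set ℂ) :
    ENNReal.ofReal (Real.pi / 4) * Measure.hausdorffMeasure 2 s ≤ volume s := by
  have hcov : ∀ n : ℕ, ∃ (t : Set ℂ) (r : ℂ → ℝ), t.Countable ∧ t ⊆ s ∧
      (∀ x ∈ t, r x ∈ Set.Ioo (0 : ℝ) (1 / ((n : ℝ) + 1))) ∧
      (s ⊆ ⋃ x ∈ t, closedBall x (r x)) ∧
      (∑' x : t, volume (closedBall (x : ℂ) (r x))) ≤ volume s + ((n : ℝ≥0∞) + 1)⁻¹ := by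
    intro n
    refine Besicovitch.exists_closedBall_covering_tsum_measure_le volume (by simp)
      (fun _ => Set.Ioo (0 : ℝ) (1 / ((n : ℝ) + 1))) s ?_
    intro x _ δ hδ
    have h1 : (0 : ℝ) < 1 / ((n : ℝ) + 1) := by positivity
    refine ⟨min δ (1 / ((n : ℝ) + 1)) / 2, ?_, ?_⟩
    · have := lt_min hδ h1
      exact ⟨by linarith, by linarith [min_le_right δ (1 / ((n : ℝ) + 1))]⟩
    · have := lt_min hδ h1
      exact ⟨by linarith, by linarith [min_le_left δ (1 / ((n : ℝ) + 1))]⟩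
  choose t r htc hts htr hcovs hsum using hcov
  have : ∀ n, Countable (t n) := fun n => (htc n).to_subtype
  have hdiam : ∀ n (x : t n), ediam (closedBall (x : ℂ) (r n x)) ≤ ENNReal.ofReal (2 * r n x) := by
    intro n x
    refine ediam_le_of_forall_dist_le (fun a ha b hb => ?_)
    have := dist_triangle_right a b (x : ℂ)
    rw [mem_closedBall] at ha hb
    linarith
  have key := Measure.hausdorffMeasure_le_liminf_tsum (X := ℂ) (ι := fun n => t n) 2 s
    (l := Filter.atTop) (fun n : ℕ => ENNReal.ofReal (2 * (1 / ((n : ℝ) + 1))))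
    (by
      have := (tendsto_one_div_add_atTop_nhds_zero_nat (𝕜 := ℝ)).const_mul 2
      simpa using ENNReal.tendsto_ofReal this)
    (fun n x => closedBall (x : ℂ) (r n x))
    (Filter.Eventually.of_forall fun n x => (hdiam n x).trans
      (ENNReal.ofReal_le_ofReal (by linarith [(htr n x x.2).2])))
    (Filter.Eventually.of_forall fun n => by
      refine (hcovs n).trans (fun y hy => ?_)
      simp only [Set.mem_iUnion] at hy ⊢
      obtain ⟨x, hx, hy⟩ := hy
      exact ⟨⟨x, hx⟩, hy⟩)
  set c := ENNReal.ofReal (Real.pi / 4) with hc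
  have hterm : ∀ n (x : t n), c * ediam (closedBall (x : ℂ) (r n x)) ^ (2 : ℝ) ≤
      volume (closedBall (x : ℂ) (r n x)) := by
    intro n x
    have hr := (htr n x x.2).1
    calc c * ediam (closedBall (x : ℂ) (r n x)) ^ (2 : ℝ)
        ≤ c * ENNReal.ofReal (2 * r n x) ^ (2 : ℝ) := by
          gcongr
          exact hdiam n x
      _ = volume (closedBall (x : ℂ) (r n x)) := by
          rw [Complex.volume_closedBall, ENNReal.rpow_two, hc,
            ← ENNReal.ofReal_pow (by linarith), ← ENNReal.ofReal_mul (by positivity),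
            ← ENNReal.ofReal_pow hr.le]
          have : (NNReal.pi : ℝ≥0∞) = ENNReal.ofReal Real.pi := by
            rw [← NNReal.coe_real_pi, ENNReal.ofReal_coe_nnreal]
          rw [this, ← ENNReal.ofReal_mul (by positivity)]
          congr 1
          ring
  have hc0 : c ≠ 0 := by simp [hc, Real.pi_pos]
  have hct : c ≠ ⊤ := ENNReal.ofReal_ne_top
  have hbound : ∀ n, ∑' x : t n, ediam (closedBall (x : ℂ) (r n x)) ^ (2 : ℝ) ≤
      c⁻¹ * (volume s + ((n : ℝ≥0∞) + 1)⁻¹) := by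
    intro n
    rw [← ENNReal.div_eq_inv_mul, ENNReal.le_div_iff_mul_le (Or.inl hc0) (Or.inl hct), mul_comm,
      ← ENNReal.tsum_mul_left]
    exact (ENNReal.tsum_le_tsum (hterm n)).trans (hsum n)
  have hlim : Filter.Tendsto (fun n : ℕ => c⁻¹ * (volume s + ((n : ℝ≥0∞) + 1)⁻¹)) Filter.atTop
      (nhds (c⁻¹ * (volume s + 0))) := by
    refine ENNReal.Tendsto.const_mul ?_ (Or.inr (ENNReal.inv_ne_top.2 hc0))
    refine tendsto_const_nhds.add ?_
    have := (Filter.tendsto_add_atTop_iff_nat 1).2 ENNReal.tendsto_inv_nat_nhds_zero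
    simpa using this
  have hfin : Measure.hausdorffMeasure 2 s ≤ c⁻¹ * volume s := by
    refine key.trans ?_
    have := Filter.liminf_le_liminf (f := Filter.atTop) (Filter.Eventually.of_forall hbound)
    rw [hlim.liminf_eq, add_zero] at this
    exact this
  calc c * Measure.hausdorffMeasure 2 s ≤ c * (c⁻¹ * volume s) := by gcongr
    _ = volume s := by rw [← mul_assoc, ENNReal.mul_inv_cancel hc0 hct, one_mul]

theorem besicovitch_inequality
    {X : Type*} [MetricSpace X] [MeasurableSpace X] [BorelSpace X]
    -- `X` is homeomorphic to a closed topological disk, via `φ`: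
    (φ : ↥(Metric.closedBall (0 : ℂ) 1) ≃ₜ X)
    -- `J` is a Jordan curve in the plane:
    (J : Set ℂ) (hJ : Nonempty (↥(Metric.sphere (0 : ℂ) 1) ≃ₜ ↥J))
    -- `Ω` is the closed Jordan domain bounded by `J`: the closure of the bounded
    -- complementary component `U` of `J`, with topological boundary `∂Ω = J`:
    (U Ω : Set ℂ)
    (hU : ∃ z ∈ Jᶜ, U = connectedComponentIn Jᶜ z)
    (hUbdd : Bornology.IsBounded U)
    (hΩ : Ω = closure U)
    (hbd : frontier Ω = J)
    -- `f : ∂X → ∂Ω = J` is `L`-Lipschitz of non-zero degree: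
    (L : ℝ≥0) (hL : 0 < L)
    (f : ↥(φ '' {x : ↥(Metric.closedBall (0 : ℂ) 1) | ‖(x : ℂ)‖ = 1}) → ↥J)
    (hf : LipschitzWith L f)
    (hdeg : ¬ (ContinuousMap.mk f hf.continuous).Nullhomotopic) :
    ENNReal.ofReal (Real.pi / (4 * (L : ℝ) ^ 2)) * hausdorff2 ℂ Ω ≤
      hausdorff2 X Set.univ := by
  classical
  obtain ⟨h⟩ := hJ
  obtain ⟨z₀, -, hUc⟩ := hU
  have hJcpt : IsCompact J := by
    have : CompactSpace J := h.compactSpace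
    exact isCompact_iff_compactSpace.2 this
  have hJcl : IsClosed J := hJcpt.isClosed
  have : CompactSpace X := φ.compactSpace
  let S : Set X := φ '' {x : ↥(Metric.closedBall (0 : ℂ) 1) | ‖(x : ℂ)‖ = 1}
  -- the coordinatewise Lipschitz extension
  let f₀ : X → Fin 2 → ℝ := fun x =>
    if hx : x ∈ S then Complex.measurableEquivPi ((f ⟨x, hx⟩ : J) : ℂ) else 0
  have hf₀ : LipschitzOnWith L f₀ S := by
    refine LipschitzOnWith.of_dist_le_mul fun x hx y hy => ?_
    have h1 : dist ((f ⟨x, hx⟩ : J) : ℂ) (f ⟨y, hy⟩ : J) ≤ L * dist x y :=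
      hf.dist_le_mul ⟨x, hx⟩ ⟨y, hy⟩
    refine le_trans ?_ h1
    simp only [f₀, hx, hy, dif_pos]
    rw [dist_pi_le_iff dist_nonneg]
    intro i
    rw [Complex.dist_eq, Real.dist_eq]
    fin_cases i
    · simpa using Complex.abs_re_le_norm (((f ⟨x, hx⟩ : J) : ℂ) - (f ⟨y, hy⟩ : J))
    · simpa using Complex.abs_im_le_norm (((f ⟨x, hx⟩ : J) : ℂ) - (f ⟨y, hy⟩ : J))
  obtain ⟨F, hF, hFe⟩ := hf₀.extend_pi
  let F' : X → ℂ := fun x => Complex.measurableEquivPi.symm (F x)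
  have hF'c : Continuous F' := by
    have := hF.continuous
    simp only [F', Complex.measurableEquivPi_symm_apply]
    fun_prop
  have hF'e : ∀ x : S, F' x = (f x : ℂ) := by
    intro x
    have := hFe x.2
    simp only [F', ← this, f₀, x.2, dif_pos, MeasurableEquiv.symm_apply_apply]
    rfl
  -- the image covers `U`
  have hcover : U ⊆ Set.range F' := by
    intro z hz
    by_contra hzr
    have hzJ : z ∉ J := by
      rw [hUc] at hz
      exact connectedComponentIn_subset _ _ hz
    -- radial retraction of the plane to the disk
    let ρ : ℂ → ↥(Metric.closedBall (0 : ℂ) 1) := fun x =>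
      ⟨(max 1 ‖x‖)⁻¹ • x, by
        have h1 : 0 < max 1 ‖x‖ := lt_of_lt_of_le one_pos (le_max_left _ _)
        rw [mem_closedBall_zero_iff, norm_smul, norm_inv, Real.norm_of_nonneg h1.le,
          inv_mul_le_iff₀ h1, mul_one]
        exact le_max_right _ _⟩
    have hρ : Continuous ρ := by
      refine Continuous.subtype_mk ?_ _
      refine Continuous.smul (Continuous.inv₀ (continuous_const.max continuous_norm) fun x => ?_)
        continuous_id
      exact (lt_of_lt_of_le one_pos (le_max_left _ _)).ne'
    have hcn : ∀ w : Circle, ‖(w : ℂ)‖ = 1 := fun w => Circle.norm_coe w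
    have hcb : ∀ w : Circle, (w : ℂ) ∈ Metric.closedBall (0 : ℂ) 1 := fun w =>
      mem_closedBall_zero_iff.2 (hcn w).le
    have hρS : ∀ w : Circle, ρ (w : ℂ) = ⟨(w : ℂ), hcb w⟩ := by
      intro w
      apply Subtype.ext
      simp [ρ, hcn w]
    obtain ⟨P, hP, hPe⟩ := bes_exists_log (fun x : ℂ => F' (φ (ρ x)) - z)
      ((hF'c.comp (φ.continuous.comp hρ)).sub continuous_const)
      (fun x hx => hzr ⟨_, sub_eq_zero.1 hx⟩)
    -- identifications with `Circle`
    let b : Circle → S := fun w => ⟨φ ⟨(w : ℂ), hcb w⟩, ⟨_, hcn w, rfl⟩⟩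
    have hb : Continuous b := by
      refine Continuous.subtype_mk (φ.continuous.comp (Continuous.subtype_mk ?_ _)) _
      exact continuous_subtype_val
    have hnorm : ∀ p : S, ‖((φ.symm p : ↥(Metric.closedBall (0 : ℂ) 1)) : ℂ)‖ = 1 := by
      rintro ⟨_, x, hx, rfl⟩
      simpa using hx
    let b' : S → Circle := fun p => ⟨(φ.symm p : ↥(Metric.closedBall (0 : ℂ) 1)), by
      simpa [Submonoid.unitSphere] using hnorm p⟩
    have hb' : Continuous b' := by
      refine Continuous.subtype_mk ?_ _
      exact continuous_subtype_val.comp (φ.symm.continuous.comp continuous_subtype_val)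
    have hbb' : ∀ p, b (b' p) = p := by
      intro p
      apply Subtype.ext
      exact φ.apply_symm_apply p
    let j : Circle → ↥(Metric.sphere (0 : ℂ) 1) := fun w =>
      ⟨(w : ℂ), mem_sphere_zero_iff_norm.2 (hcn w)⟩
    have hj : Continuous j := continuous_subtype_val.subtype_mk _
    let j' : ↥(Metric.sphere (0 : ℂ) 1) → Circle := fun w => ⟨w, by
      simp [Submonoid.unitSphere]⟩
    have hj' : Continuous j' := continuous_subtype_val.subtype_mk _
    have hjj' : ∀ w, j (j' w) = w := fun w => rfl
    have hj'j : ∀ w, j' (j w) = w := fun w => rfl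
    have hfc : Continuous f := hf.continuous
    obtain ⟨κ, hκ, hκe⟩ := bes_circle_factor (fun w => (h (j w) : ℂ) - z)
      (by fun_prop) (fun w hw => hzJ (by
        rw [← sub_eq_zero.1 hw]
        exact (h (j w)).2))
      (by
        rintro ⟨g, hg, hge⟩
        refine bes_no_log J hJcl U z₀ hUc hUbdd z hz (fun x => g (j' (h.symm x)))
          (by fun_prop) (fun x => ?_)
        rw [hge, hjj', h.apply_symm_apply])
      (fun w => j' (h.symm (f (b w)))) (by fun_prop)
      (fun w => P (w : ℂ)) (by fun_prop)
      (by
        intro w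
        rw [hPe, hρS, hjj', h.apply_symm_apply, ← hF'e (b w)])
    apply hdeg
    have hnull : (ContinuousMap.mk (fun p : S => κ (b' p)) (by fun_prop)).Nullhomotopic :=
      (id_nullhomotopic ℝ).comp_left (ContinuousMap.mk (fun p : S => κ (b' p)) (by fun_prop))
    have h2 := hnull.comp_right
      (ContinuousMap.mk (fun t : ℝ => h (j (Circle.exp t))) (by fun_prop))
    have h3 : ∀ p : S, h (j (Circle.exp (κ (b' p)))) = f p := by
      intro p
      rw [hκe, hjj', h.apply_symm_apply, hbb']
    have h4 : (ContinuousMap.mk (fun t : ℝ => h (j (Circle.exp t))) (by fun_prop)).comp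
        (ContinuousMap.mk (fun p : S => κ (b' p)) (by fun_prop)) =
        ContinuousMap.mk f hf.continuous := ContinuousMap.ext h3
    rw [← h4]
    exact h2
  have hΩsub : Ω ⊆ Set.range F' := by
    rw [hΩ]
    exact closure_minimal hcover (isCompact_range hF'c).isClosed
  -- measure estimate
  have hvol : volume Ω ≤ (L : ℝ≥0∞) ^ 2 * Measure.hausdorffMeasure 2 (Set.univ : Set X) := by
    have h1 : volume (Set.range F') = volume (Set.range F) := by
      have : Set.range F' = Complex.measurableEquivPi ⁻¹' (Set.range F) := by
        ext y
        simp only [F', Set.mem_range, Set.mem_preimage, MeasurableEquiv.symm_apply_eq]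
      rw [this]
      exact Complex.volume_preserving_equiv_pi.measure_preimage_equiv _
    have h2 := hF.hausdorffMeasure_image_le (d := 2) (by norm_num) Set.univ
    have h3 : (Measure.hausdorffMeasure 2 : Measure (Fin 2 → ℝ)) = volume := by
      rw [← hausdorffMeasure_pi_real]
      simp
    rw [h3, Set.image_univ, ENNReal.rpow_two] at h2
    exact (measure_mono hΩsub).trans (h1.le.trans h2)
  have hLr : (0 : ℝ) < L := hL
  simp only [hausdorff2, Measure.smul_apply, smul_eq_mul]
  calc ENNReal.ofReal (Real.pi / (4 * (L : ℝ) ^ 2)) *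
        (ENNReal.ofReal (Real.pi / 4) * Measure.hausdorffMeasure 2 Ω)
      ≤ ENNReal.ofReal (Real.pi / (4 * (L : ℝ) ^ 2)) *
        ((L : ℝ≥0∞) ^ 2 * Measure.hausdorffMeasure 2 (Set.univ : Set X)) := by
        exact mul_le_mul_right ((bes_hausdorff_le Ω).trans hvol) _
    _ = ENNReal.ofReal (Real.pi / 4) * Measure.hausdorffMeasure 2 (Set.univ : Set X) := by
        rw [← mul_assoc]
        congr 1
        rw [← ENNReal.ofReal_coe_nnreal, ← ENNReal.ofReal_pow hLr.le,
          ← ENNReal.ofReal_mul (by positivity)]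
        congr 1
        field_simp
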